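/- Let S be a positive integer, n a positive integer, 0 < ε < 1, and Q ∈ M_S. Then R_P(S, n(1−ε)/4, Q, 0) ≥ (1/4)·R_P(S, n, Q, ε) − (1/2)·e^{−n(1−ε)/8} − (1/2)·ε². -/

import Mathlib

open scoped BigOperators ENNReal

/-- The Poisson(lam) probability mass function on the nonnegative integers. -/
noncomputable def poissonPMF (lam : ℝ) (k : ℕ) : ℝ :=
  Real.exp (-lam) * lam ^ k / (Nat.factorial k)

/-- `P` is a probability vector on `{1,…,S}` (an element of `M_S`). -/
def IsDist {S : ℕ} (q : Fin S → ℝ) : Prop :=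
  (∀ i, 0 ≤ q i) ∧ ∑ i, q i = 1

/-- `P ∈ M_S(ε)`: an approximate probability vector, `p_i ≥ 0` and `|Σ p_i − 1| ≤ ε`. -/
def ApproxDist {S : ℕ} (ε : ℝ) (p : Fin S → ℝ) : Prop :=
  (∀ i, 0 ≤ p i) ∧ |∑ i, p i - 1| ≤ ε

/-- Joint pmf of `S` independent coordinates `X_i ~ Poisson(t p_i)`, real rate `t`. -/
noncomputable def prodPMFR {S : ℕ} (t : ℝ) (p : Fin S → ℝ) (x : Fin S → ℕ) : ℝ :=
  ∏ i, poissonPMF (t * p i) (x i)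

/-- The `L₁` distance between two vectors. -/
noncomputable def L1dist {S : ℕ} (p q : Fin S → ℝ) : ℝ :=
  ∑ i, |p i - q i|

/-- The minimax risk `R_P(S, t, Q, ε)` over `M_S(ε)` in the Poisson sampling model
with rate `t`, valued in `ℝ≥0∞`. -/
noncomputable def RP (S : ℕ) (t : ℝ) (q : Fin S → ℝ) (ε : ℝ) : ℝ≥0∞ :=
  ⨅ est : (Fin S → ℕ) → ℝ, ⨆ p : {p : Fin S → ℝ // ApproxDist ε p},
    ∑' x : Fin S → ℕ,
      ENNReal.ofReal (prodPMFR t p.1 x * (est x - L1dist p.1 q) ^ 2)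

/-!
A vector of `M_S(ε)` is `s • p` with `p` a probability vector and `|s - 1| ≤ ε`, and Poisson
sampling of `s • p` at rate `n` is Poisson sampling of `p` at rate `n * s`. From counts of total
`N` sampled at rate `n * s`, draw `m ~ Poisson(t)` and, if `m ≤ N`, keep `m` of the observations
chosen without replacement: given `m`, these are `m` independent draws from `p`, so the retained
counts are distributed as in the model at rate `t`, up to the event `m > N`. This needs no
knowledge of `s`. Averaging an estimator over the subsample does not increase its squared error,
by Jensen's inequality. On the event `m > N`, of probability at most `exp (t - n * s / 2)` by a
Chernoff bound, the estimator returns the midpoint of the range of `L₁(·, Q)` on the simplex,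
which has length at most `2`, at a cost of at most `1`. Replacing the target `L₁(p, Q)` by
`L₁(s • p, Q)` moves it by at most `ε`.
-/

section Poisson

lemma poissonPMF_nonneg {t : ℝ} (ht : 0 ≤ t) (k : ℕ) : 0 ≤ poissonPMF t k := by
  unfold poissonPMF
  positivity

lemma hasSum_poissonPMF_mul_pow (t r : ℝ) :
    HasSum (fun k ↦ poissonPMF t k * r ^ k) (Real.exp (t * (r - 1))) := by
  have hterm : (fun k ↦ poissonPMF t k * r ^ k) =
      fun k ↦ Real.exp (-t) * ((t * r) ^ k / k.factorial) := by
    funext k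
    rw [poissonPMF, mul_pow]
    ring
  rw [hterm, show t * (r - 1) = -t + t * r by ring, Real.exp_add, Real.exp_eq_exp_ℝ]
  exact (NormedSpace.expSeries_div_hasSum_exp (t * r)).mul_left _

lemma hasSum_poissonPMF (t : ℝ) : HasSum (poissonPMF t) 1 := by
  simpa using hasSum_poissonPMF_mul_pow t 1

lemma one_sub_sum_range_poissonPMF_le {t r : ℝ} (ht : 0 ≤ t) (hr : 1 ≤ r) (N : ℕ) :
    1 - ∑ m ∈ Finset.range (N + 1), poissonPMF t m ≤ Real.exp (t * (r - 1)) * r⁻¹ ^ N := by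
  have : 0 < r := one_pos.trans_le hr
  have hpow (m : ℕ) : r ^ m * r⁻¹ ^ N = r ^ m / r ^ N := by rw [inv_pow, div_eq_mul_inv]
  have hdiff := ((hasSum_poissonPMF_mul_pow t r).mul_right (r⁻¹ ^ N)).sub (hasSum_poissonPMF t)
  have htail := sum_le_hasSum (Finset.range (N + 1)) (fun m hm ↦ ?_) hdiff
  · have hhead : 0 ≤ ∑ m ∈ Finset.range (N + 1), poissonPMF t m * r ^ m * r⁻¹ ^ N :=
      Finset.sum_nonneg fun m _ ↦ by have := poissonPMF_nonneg ht m; positivity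
    rw [Finset.sum_sub_distrib] at htail
    linarith
  · have hNm : N ≤ m := by rw [Finset.mem_range] at hm; lia
    rw [sub_nonneg, mul_assoc, hpow]
    exact le_mul_of_one_le_right (poissonPMF_nonneg ht m)
      ((one_le_div (by positivity)).2 (pow_le_pow_right₀ hr hNm))

end Poisson

section Multinomial

variable {ι : Type*} [Fintype ι]

/-- The multinomial probability of the counts `x` in a sample of size `∑ i, x i` drawn
independently from `p`. -/
noncomputable def multinomialWeight (p : ι → ℝ) (x : ι → ℕ) : ℝ :=
  Nat.multinomial Finset.univ x * ∏ i, p i ^ x i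

lemma multinomialWeight_nonneg {p : ι → ℝ} (hp : ∀ i, 0 ≤ p i) (x : ι → ℕ) :
    0 ≤ multinomialWeight p x :=
  mul_nonneg (Nat.cast_nonneg _) (Finset.prod_nonneg fun i _ ↦ pow_nonneg (hp i) _)

lemma sum_piAntidiag_multinomialWeight [DecidableEq ι] (p : ι → ℝ) (k : ℕ) :
    ∑ x ∈ Finset.piAntidiag Finset.univ k, multinomialWeight p x = (∑ i, p i) ^ k :=
  (Finset.sum_pow_eq_sum_piAntidiag Finset.univ p k).symm

lemma tsum_mul_multinomialWeight {p : ι → ℝ} (hp : ∀ i, 0 ≤ p i) (f : ℕ → ℝ≥0∞) :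
    ∑' x, f (∑ i, x i) * ENNReal.ofReal (multinomialWeight p x) =
      ∑' k, f k * ENNReal.ofReal ((∑ i, p i) ^ k) := by
  classical
  rw [← ENNReal.tsum_fiberwise _ fun x : ι → ℕ ↦ ∑ i, x i]
  refine tsum_congr fun k ↦ ?_
  have hfiber : (fun x : ι → ℕ ↦ ∑ i, x i) ⁻¹' {k} =
      (Finset.piAntidiag Finset.univ k : Finset (ι → ℕ)) := by
    ext x
    simp
  rw [hfiber, Finset.tsum_subtype' _ fun x : ι → ℕ ↦
      f (∑ i, x i) * ENNReal.ofReal (multinomialWeight p x),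
    ← sum_piAntidiag_multinomialWeight,
    ENNReal.ofReal_sum_of_nonneg fun x _ ↦ multinomialWeight_nonneg hp x, Finset.mul_sum]
  refine Finset.sum_congr rfl fun x hx ↦ ?_
  rw [(Finset.mem_piAntidiag.1 hx).1]

lemma multinomialWeight_eq_factorial_mul_prod (p : ι → ℝ) (x : ι → ℕ) :
    multinomialWeight p x = (∑ i, x i).factorial * ∏ i, p i ^ x i / (x i).factorial := by
  have hfact : (∏ i, ((x i).factorial : ℝ)) * Nat.multinomial Finset.univ x =
      (∑ i, x i).factorial := by
    exact_mod_cast Nat.multinomial_spec Finset.univ x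
  have hpos : ∏ i, ((x i).factorial : ℝ) ≠ 0 := by positivity
  rw [multinomialWeight, Finset.prod_div_distrib, ← hfact]
  field_simp

end Multinomial

section Hypergeometric

variable {ι : Type*} [Fintype ι]

/-- The multivariate hypergeometric probability that `∑ i, y i` draws without replacement from a
sample with counts `x` have counts `y`. It vanishes unless `y ≤ x`, also where the denominator
is zero. -/
noncomputable def hypergeometricWeight (x y : ι → ℕ) : ℝ :=
  (∏ i, (x i).choose (y i)) / (∑ i, x i).choose (∑ i, y i)

lemma hypergeometricWeight_nonneg (x y : ι → ℕ) : 0 ≤ hypergeometricWeight x y := by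
  unfold hypergeometricWeight
  positivity

lemma hypergeometricWeight_eq_zero {x y : ι → ℕ} (h : ¬ y ≤ x) : hypergeometricWeight x y = 0 := by
  obtain ⟨i, hi⟩ := not_forall.1 h
  rw [hypergeometricWeight, Finset.prod_eq_zero (Finset.mem_univ i)
    (Nat.choose_eq_zero_of_lt (not_le.1 hi)), Nat.cast_zero, zero_div]

lemma multinomialWeight_add_mul_hypergeometricWeight (p : ι → ℝ) (y z : ι → ℕ) :
    multinomialWeight p (y + z) * hypergeometricWeight (y + z) y =
      multinomialWeight p y * multinomialWeight p z := by
  have hprod : (∏ i, p i ^ (y i + z i) / (y i + z i).factorial) *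
      ∏ i, ((y i + z i).choose (y i) : ℝ) =
      (∏ i, p i ^ y i / (y i).factorial) * ∏ i, p i ^ z i / (z i).factorial := by
    simp only [← Finset.prod_mul_distrib, Nat.cast_add_choose, pow_add]
    exact Finset.prod_congr rfl fun i _ ↦ by field_simp
  simp only [multinomialWeight_eq_factorial_mul_prod, hypergeometricWeight, Pi.add_apply,
    Finset.sum_add_distrib, Nat.cast_prod, Nat.cast_add_choose ℝ (a := ∑ i, y i)]
  rw [mul_div_assoc', mul_assoc, hprod]
  field_simp

open Polynomial in
lemma sum_prod_choose_eq_choose_sum [DecidableEq ι] (x : ι → ℕ) (m : ℕ) :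
    ∑ y ∈ Finset.Iic x with ∑ i, y i = m, ∏ i, (x i).choose (y i) = (∑ i, x i).choose m := by
  have hpow (i : ι) : (X + 1 : ℕ[X]) ^ x i =
      ∑ k ∈ Finset.Iic (x i), C ((x i).choose k) * X ^ k := by
    rw [add_pow, Nat.range_succ_eq_Iic]
    exact Finset.sum_congr rfl fun k _ ↦ by simp [mul_comm]
  have hexpand : (X + 1 : ℕ[X]) ^ ∑ i, x i =
      ∑ y ∈ Finset.Iic x, C (∏ i, (x i).choose (y i)) * X ^ ∑ i, y i := by
    simp only [← Finset.prod_pow_eq_pow_sum, hpow, Finset.prod_univ_sum, map_prod,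
      ← Finset.prod_mul_distrib]
    rfl
  rw [← Nat.cast_id ((∑ i, x i).choose m), ← coeff_X_add_one_pow, hexpand, finsetSum_coeff,
    Finset.sum_filter]
  simp only [coeff_C_mul_X_pow, eq_comm]

lemma sum_mul_hypergeometricWeight [DecidableEq ι] (x : ι → ℕ) (f : ℕ → ℝ) :
    ∑ y ∈ Finset.Iic x, f (∑ i, y i) * hypergeometricWeight x y =
      ∑ m ∈ Finset.range (∑ i, x i + 1), f m := by
  have hmaps : ∀ y ∈ Finset.Iic x, ∑ i, y i ∈ Finset.range (∑ i, x i + 1) := fun y hy ↦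
    Finset.mem_range_succ_iff.2 (Finset.sum_le_sum fun i _ ↦ Finset.mem_Iic.1 hy i)
  rw [← Finset.sum_fiberwise_of_maps_to hmaps]
  refine Finset.sum_congr rfl fun m hm ↦ ?_
  have hchoose : ((∑ i, x i).choose m : ℝ) ≠ 0 := by
    exact_mod_cast (Nat.choose_pos (Finset.mem_range_succ_iff.1 hm)).ne'
  calc ∑ y ∈ Finset.Iic x with ∑ i, y i = m, f (∑ i, y i) * hypergeometricWeight x y
      = ∑ y ∈ Finset.Iic x with ∑ i, y i = m,
          f m / (∑ i, x i).choose m * ((∏ i, (x i).choose (y i) : ℕ) : ℝ) := by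
        refine Finset.sum_congr rfl fun y hy ↦ ?_
        rw [hypergeometricWeight, (Finset.mem_filter.1 hy).2, Nat.cast_prod]
        ring
    _ = f m := by
        rw [← Finset.mul_sum, ← Nat.cast_sum, sum_prod_choose_eq_choose_sum,
          div_mul_cancel₀ _ hchoose]

end Hypergeometric

section PoissonSampling

variable {S : ℕ} {t : ℝ} {p : Fin S → ℝ}

lemma prodPMFR_nonneg (ht : 0 ≤ t) (hp : ∀ i, 0 ≤ p i) (x : Fin S → ℕ) : 0 ≤ prodPMFR t p x :=
  Finset.prod_nonneg fun i _ ↦ poissonPMF_nonneg (mul_nonneg ht (hp i)) _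

lemma prodPMFR_smul (t s : ℝ) (p : Fin S → ℝ) : prodPMFR t (s • p) = prodPMFR (t * s) p := by
  funext x
  simp only [prodPMFR, Pi.smul_apply, smul_eq_mul, mul_assoc]

lemma prodPMFR_eq_poissonPMF_mul_multinomialWeight (t : ℝ) (hp : ∑ i, p i = 1) (x : Fin S → ℕ) :
    prodPMFR t p x = poissonPMF t (∑ i, x i) * multinomialWeight p x := by
  have hexp : ∏ i, Real.exp (-(t * p i)) = Real.exp (-t) := by
    rw [← Real.exp_sum, Finset.sum_neg_distrib, ← Finset.mul_sum, hp, mul_one]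
  have hterm (i : Fin S) : poissonPMF (t * p i) (x i) =
      Real.exp (-(t * p i)) * t ^ x i * (p i ^ x i / (x i).factorial) := by
    rw [poissonPMF, mul_pow]
    ring
  simp only [prodPMFR, hterm, Finset.prod_mul_distrib, hexp, Finset.prod_pow_eq_pow_sum]
  rw [poissonPMF, multinomialWeight_eq_factorial_mul_prod]
  field_simp

lemma tsum_prodPMFR_mul_comp_sum (t : ℝ) (hp : IsDist p) (g : ℕ → ℝ) :
    ∑' x, ENNReal.ofReal (prodPMFR t p x * g (∑ i, x i)) =
      ∑' k, ENNReal.ofReal (poissonPMF t k * g k) := by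
  have hterm (x : Fin S → ℕ) : ENNReal.ofReal (prodPMFR t p x * g (∑ i, x i)) =
      ENNReal.ofReal (poissonPMF t (∑ i, x i) * g (∑ i, x i)) *
        ENNReal.ofReal (multinomialWeight p x) := by
    rw [← ENNReal.ofReal_mul' (multinomialWeight_nonneg hp.1 x),
      prodPMFR_eq_poissonPMF_mul_multinomialWeight t hp.2, mul_right_comm]
  simp only [hterm, tsum_mul_multinomialWeight hp.1 fun k ↦ ENNReal.ofReal (poissonPMF t k * g k),
    hp.2, one_pow, ENNReal.ofReal_one, mul_one]

lemma tsum_prodPMFR_mul_pow {r : ℝ} (ht : 0 ≤ t) (hr : 0 ≤ r) (hp : IsDist p) :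
    ∑' x, ENNReal.ofReal (prodPMFR t p x * r ^ ∑ i, x i) =
      ENNReal.ofReal (Real.exp (t * (r - 1))) := by
  have hpgf := hasSum_poissonPMF_mul_pow t r
  rw [tsum_prodPMFR_mul_comp_sum t hp (r ^ ·), ← hpgf.tsum_eq,
    ENNReal.ofReal_tsum_of_nonneg (fun k ↦ mul_nonneg (poissonPMF_nonneg ht k) (pow_nonneg hr k))
      hpgf.summable]

lemma tsum_prodPMFR_eq_one (ht : 0 ≤ t) (hp : IsDist p) :
    ∑' x, ENNReal.ofReal (prodPMFR t p x) = 1 := by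
  simpa using tsum_prodPMFR_mul_pow ht zero_le_one hp

end PoissonSampling

section Subsampling

/-- The law of the counts `y` obtained by drawing a size `m ~ Poisson(t)` and, when possible,
choosing `m` of the observations recorded in the counts `x` without replacement. The row at `x` has
total mass less than one: it omits the event that `m` exceeds the number of observations. -/
noncomputable def subsampleKernel {ι : Type*} [Fintype ι] (t : ℝ) (x y : ι → ℕ) : ℝ :=
  poissonPMF t (∑ i, y i) * hypergeometricWeight x y

variable {ι : Type*} [Fintype ι] {S : ℕ} {lam t : ℝ} {p : Fin S → ℝ}

lemma subsampleKernel_nonneg (ht : 0 ≤ t) (x y : ι → ℕ) : 0 ≤ subsampleKernel t x y :=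
  mul_nonneg (poissonPMF_nonneg ht _) (hypergeometricWeight_nonneg x y)

lemma sum_subsampleKernel [DecidableEq ι] (t : ℝ) (x : ι → ℕ) :
    ∑ y ∈ Finset.Iic x, subsampleKernel t x y =
      ∑ m ∈ Finset.range (∑ i, x i + 1), poissonPMF t m :=
  sum_mul_hypergeometricWeight x (poissonPMF t)

lemma sum_subsampleKernel_le_one [DecidableEq ι] (ht : 0 ≤ t) (x : ι → ℕ) :
    ∑ y ∈ Finset.Iic x, subsampleKernel t x y ≤ 1 := by
  rw [sum_subsampleKernel]
  exact sum_le_hasSum _ (fun m _ ↦ poissonPMF_nonneg ht m) (hasSum_poissonPMF t)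

lemma prodPMFR_add_mul_subsampleKernel (hp : ∑ i, p i = 1) (y z : Fin S → ℕ) :
    prodPMFR lam p (y + z) * subsampleKernel t (y + z) y =
      prodPMFR t p y * (poissonPMF lam (∑ i, y i + ∑ i, z i) * multinomialWeight p z) := by
  have hsplit := multinomialWeight_add_mul_hypergeometricWeight p y z
  simp only [prodPMFR_eq_poissonPMF_mul_multinomialWeight _ hp, subsampleKernel, Pi.add_apply,
    Finset.sum_add_distrib]
  linear_combination poissonPMF lam (∑ i, y i + ∑ i, z i) * poissonPMF t (∑ i, y i) * hsplit

lemma tsum_prodPMFR_mul_subsampleKernel_le (hlam : 0 ≤ lam) (ht : 0 ≤ t) (hp : IsDist p)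
    (y : Fin S → ℕ) :
    ∑' x, ENNReal.ofReal (prodPMFR lam p x * subsampleKernel t x y) ≤
      ENNReal.ofReal (prodPMFR t p y) := by
  have hsupport : (Function.support fun x ↦
      ENNReal.ofReal (prodPMFR lam p x * subsampleKernel t x y)) ⊆ Set.range (y + ·) := by
    intro x hx
    have hyx : y ≤ x := by
      by_contra h
      simp [subsampleKernel, hypergeometricWeight_eq_zero h] at hx
    exact ⟨x - y, add_tsub_cancel_of_le hyx⟩
  calc ∑' x, ENNReal.ofReal (prodPMFR lam p x * subsampleKernel t x y)
      = ∑' z, ENNReal.ofReal (prodPMFR t p y) *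
          (ENNReal.ofReal (poissonPMF lam (∑ i, y i + ∑ i, z i)) *
            ENNReal.ofReal (multinomialWeight p z)) := by
        rw [← (add_right_injective y).tsum_eq hsupport]
        refine tsum_congr fun z ↦ ?_
        rw [prodPMFR_add_mul_subsampleKernel hp.2,
          ENNReal.ofReal_mul (prodPMFR_nonneg ht hp.1 y),
          ENNReal.ofReal_mul (poissonPMF_nonneg hlam _)]
    _ = ENNReal.ofReal (prodPMFR t p y) *
          ∑' k, ENNReal.ofReal (poissonPMF lam (∑ i, y i + k)) := by
        rw [ENNReal.tsum_mul_left, tsum_mul_multinomialWeight hp.1 fun k ↦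
          ENNReal.ofReal (poissonPMF lam (∑ i, y i + k))]
        simp only [hp.2, one_pow, ENNReal.ofReal_one, mul_one]
    _ ≤ ENNReal.ofReal (prodPMFR t p y) * ∑' k, ENNReal.ofReal (poissonPMF lam k) := by
        gcongr ENNReal.ofReal _ * ?_
        exact ENNReal.tsum_comp_le_tsum_of_injective (add_right_injective (∑ i, y i))
          fun k ↦ ENNReal.ofReal (poissonPMF lam k)
    _ = ENNReal.ofReal (prodPMFR t p y) := by
        rw [← ENNReal.ofReal_tsum_of_nonneg (poissonPMF_nonneg hlam)
          (hasSum_poissonPMF lam).summable, (hasSum_poissonPMF lam).tsum_eq, ENNReal.ofReal_one,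
          mul_one]

lemma tsum_prodPMFR_mul_one_sub_sum_subsampleKernel_le {r : ℝ} (hlam : 0 ≤ lam) (ht : 0 ≤ t)
    (hr : 1 ≤ r) (hp : IsDist p) :
    ∑' x, ENNReal.ofReal (prodPMFR lam p x * (1 - ∑ y ∈ Finset.Iic x, subsampleKernel t x y)) ≤
      ENNReal.ofReal (Real.exp (t * (r - 1) + lam * (r⁻¹ - 1))) := by
  calc ∑' x, ENNReal.ofReal (prodPMFR lam p x * (1 - ∑ y ∈ Finset.Iic x, subsampleKernel t x y))
      ≤ ∑' x, ENNReal.ofReal (Real.exp (t * (r - 1))) *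
          ENNReal.ofReal (prodPMFR lam p x * r⁻¹ ^ ∑ i, x i) := by
        refine ENNReal.tsum_le_tsum fun x ↦ ?_
        rw [← ENNReal.ofReal_mul (Real.exp_pos _).le, mul_left_comm, sum_subsampleKernel]
        exact ENNReal.ofReal_le_ofReal (mul_le_mul_of_nonneg_left
          (one_sub_sum_range_poissonPMF_le ht hr _) (prodPMFR_nonneg hlam hp.1 x))
    _ = ENNReal.ofReal (Real.exp (t * (r - 1) + lam * (r⁻¹ - 1))) := by
        rw [ENNReal.tsum_mul_left, tsum_prodPMFR_mul_pow hlam (by positivity) hp,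
          ← ENNReal.ofReal_mul (Real.exp_pos _).le, Real.exp_add]

end Subsampling

section SquaredErrorRisk

variable {X Y : Type*}

/-- The expected squared error of the estimator `est` of the value `θ` when the observation has
probability mass function `w`. -/
noncomputable def sqRisk (w est : X → ℝ) (θ : ℝ) : ℝ≥0∞ :=
  ∑' x, ENNReal.ofReal (w x * (est x - θ) ^ 2)

/-- The conditional expectation of the estimator `est` under the kernel `k`, whose row at `x` is a
subprobability mass function on `T x`; the missing mass is placed at the default value `c`. -/
noncomputable def kernelAverage (T : X → Finset Y) (k : X → Y → ℝ) (est : Y → ℝ) (c : ℝ) (x : X) :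
    ℝ :=
  ∑ y ∈ T x, k x y * est y + (1 - ∑ y ∈ T x, k x y) * c

lemma sq_kernelAverage_sub_le {T : X → Finset Y} {k : X → Y → ℝ} {x : X}
    (hk : ∀ y ∈ T x, 0 ≤ k x y) (hk_sum : ∑ y ∈ T x, k x y ≤ 1) (est : Y → ℝ) (c θ : ℝ) :
    (kernelAverage T k est c x - θ) ^ 2 ≤
      ∑ y ∈ T x, k x y * (est y - θ) ^ 2 + (1 - ∑ y ∈ T x, k x y) * (c - θ) ^ 2 := by
  have hmean : kernelAverage T k est c x - θ =
      (1 - ∑ y ∈ T x, k x y) * (c - θ) + ∑ y ∈ T x, k x y * (est y - θ) := by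
    simp only [kernelAverage, mul_sub, Finset.sum_sub_distrib, ← Finset.sum_mul]
    ring
  -- Jensen's inequality on `Option Y`, where `none` carries the missing mass.
  have hjensen := even_two.convexOn_pow.map_sum_le (𝕜 := ℝ) (t := Finset.insertNone (T x))
    (w := fun o ↦ o.elim (1 - ∑ y ∈ T x, k x y) (k x)) (p := fun o ↦ o.elim c est - θ)
    (Finset.forall_mem_insertNone.2 ⟨sub_nonneg.2 hk_sum, hk⟩)
    (by simp [Finset.sum_insertNone]) (fun _ _ ↦ Set.mem_univ _)
  simp only [Finset.sum_insertNone, Option.elim_none, Option.elim_some, smul_eq_mul] at hjensen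
  rw [hmean]
  linarith

lemma sqRisk_kernelAverage_le {w : X → ℝ} {w' : Y → ℝ} {T : X → Finset Y} {k : X → Y → ℝ}
    (hw : ∀ x, 0 ≤ w x) (hk : ∀ x y, 0 ≤ k x y) (hk_sum : ∀ x, ∑ y ∈ T x, k x y ≤ 1)
    (hpush : ∀ y, ∑' x, ENNReal.ofReal (w x * k x y) ≤ ENNReal.ofReal (w' y))
    (est : Y → ℝ) (c θ : ℝ) :
    sqRisk w (kernelAverage T k est c) θ ≤ sqRisk w' est θ +
      (∑' x, ENNReal.ofReal (w x * (1 - ∑ y ∈ T x, k x y))) * ENNReal.ofReal ((c - θ) ^ 2) := by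
  have hpoint (x : X) : ENNReal.ofReal (w x * (kernelAverage T k est c x - θ) ^ 2) ≤
      ∑' y, ENNReal.ofReal (w x * k x y) * ENNReal.ofReal ((est y - θ) ^ 2) +
        ENNReal.ofReal (w x * (1 - ∑ y ∈ T x, k x y)) * ENNReal.ofReal ((c - θ) ^ 2) := by
    have hjensen := mul_le_mul_of_nonneg_left
      (sq_kernelAverage_sub_le (fun y _ ↦ hk x y) (hk_sum x) est c θ) (hw x)
    rw [mul_add, Finset.mul_sum] at hjensen
    simp only [← mul_assoc] at hjensen
    refine (ENNReal.ofReal_le_ofReal hjensen).trans (ENNReal.ofReal_add_le.trans ?_)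
    rw [ENNReal.ofReal_mul' (sq_nonneg (c - θ)), ENNReal.ofReal_sum_of_nonneg
      fun y _ ↦ mul_nonneg (mul_nonneg (hw x) (hk x y)) (sq_nonneg _)]
    simp only [ENNReal.ofReal_mul' (sq_nonneg (est _ - θ))]
    gcongr
    exact ENNReal.sum_le_tsum (T x)
  refine (ENNReal.tsum_le_tsum hpoint).trans ?_
  rw [ENNReal.tsum_add, ENNReal.tsum_mul_right, ENNReal.tsum_comm, sqRisk]
  gcongr with y
  rw [ENNReal.tsum_mul_right, ENNReal.ofReal_mul' (sq_nonneg _)]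
  gcongr
  exact hpush y

lemma sqRisk_le_two_mul_sqRisk_add {w : X → ℝ} (hw : ∀ x, 0 ≤ w x) (est : X → ℝ) (θ θ' : ℝ) :
    sqRisk w est θ' ≤
      2 * sqRisk w est θ + 2 * ((∑' x, ENNReal.ofReal (w x)) * ENNReal.ofReal ((θ - θ') ^ 2)) := by
  rw [sqRisk, sqRisk, ← mul_add, ← ENNReal.tsum_mul_right, ← ENNReal.tsum_add,
    ← ENNReal.tsum_mul_left]
  refine ENNReal.tsum_le_tsum fun x ↦ ?_
  have hsq : (est x - θ') ^ 2 ≤ 2 * ((est x - θ) ^ 2 + (θ - θ') ^ 2) := by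
    simpa using add_sq_le (a := est x - θ) (b := θ - θ')
  calc ENNReal.ofReal (w x * (est x - θ') ^ 2)
      ≤ ENNReal.ofReal (2 * (w x * (est x - θ) ^ 2 + w x * (θ - θ') ^ 2)) := by
        rw [← mul_add, mul_left_comm]
        exact ENNReal.ofReal_le_ofReal (mul_le_mul_of_nonneg_left hsq (hw x))
    _ = _ := by
        rw [ENNReal.ofReal_mul zero_le_two, ENNReal.ofReal_ofNat, ENNReal.ofReal_add
          (mul_nonneg (hw x) (sq_nonneg _)) (mul_nonneg (hw x) (sq_nonneg _)),
          ENNReal.ofReal_mul' (sq_nonneg (θ - θ'))]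

end SquaredErrorRisk

section L1dist

variable {S : ℕ} {p p' : Fin S → ℝ}

lemma abs_L1dist_sub_L1dist_le (p p' q : Fin S → ℝ) :
    |L1dist p q - L1dist p' q| ≤ L1dist p p' := by
  rw [L1dist, L1dist, L1dist, ← Finset.sum_sub_distrib]
  refine (Finset.abs_sum_le_sum_abs _ _).trans (Finset.sum_le_sum fun i _ ↦ ?_)
  simpa using abs_abs_sub_abs_le_abs_sub (p i - q i) (p' i - q i)

lemma L1dist_le_two (hp : IsDist p) (hp' : IsDist p') : L1dist p p' ≤ 2 := by
  calc L1dist p p' ≤ ∑ i, (p i + p' i) := Finset.sum_le_sum fun i _ ↦ by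
        rw [abs_le]
        constructor <;> linarith [hp.1 i, hp'.1 i]
    _ = 2 := by rw [Finset.sum_add_distrib, hp.2, hp'.2, one_add_one_eq_two]

lemma L1dist_smul_self (hp : IsDist p) (s : ℝ) : L1dist (s • p) p = |s - 1| := by
  have hterm (i : Fin S) : |(s • p) i - p i| = |s - 1| * p i := by
    rw [Pi.smul_apply, smul_eq_mul, ← sub_one_mul, abs_mul, abs_of_nonneg (hp.1 i)]
  simp only [L1dist, hterm, ← Finset.mul_sum, hp.2, mul_one]

lemma exists_forall_abs_sub_le_of_sub_le {α : Type*} {f : α → ℝ} {r : ℝ}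
    (hf : ∀ a b, f a - f b ≤ 2 * r) : ∃ c, ∀ a, |c - f a| ≤ r := by
  refine ⟨(⨆ a, f a) - r, fun a ↦ ?_⟩
  have : Nonempty α := ⟨a⟩
  have hbdd : ∀ b, f b ≤ f a + 2 * r := fun b ↦ by linarith [hf b a]
  have hle : f a ≤ ⨆ b, f b := le_ciSup ⟨_, Set.forall_mem_range.2 hbdd⟩ a
  have hge : ⨆ b, f b ≤ f a + 2 * r := ciSup_le hbdd
  rw [abs_le]
  constructor <;> linarith

lemma exists_forall_abs_sub_L1dist_le_one (q : Fin S → ℝ) :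
    ∃ c, ∀ p, IsDist p → |c - L1dist p q| ≤ 1 := by
  obtain ⟨c, hc⟩ := exists_forall_abs_sub_le_of_sub_le (r := 1)
    (f := fun p : {p : Fin S → ℝ // IsDist p} ↦ L1dist p.1 q) fun p p' ↦ by
      linarith [le_of_abs_le (abs_L1dist_sub_L1dist_le p.1 p'.1 q), L1dist_le_two p.2 p'.2]
  exact ⟨c, fun p hp ↦ hc ⟨p, hp⟩⟩

end L1dist

section MinimaxRisk

variable {S : ℕ} {n t ε : ℝ} {p : Fin S → ℝ}

lemma IsDist.approxDist_zero (hp : IsDist p) : ApproxDist 0 p := ⟨hp.1, by simp [hp.2]⟩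

lemma ApproxDist.exists_eq_smul (hp : ApproxDist ε p) (hε : ε < 1) :
    ∃ (s : ℝ) (p₀ : Fin S → ℝ), IsDist p₀ ∧ |s - 1| ≤ ε ∧ p = s • p₀ := by
  have hs : 0 < ∑ i, p i := by linarith [(abs_le.1 hp.2).1]
  refine ⟨∑ i, p i, (∑ i, p i)⁻¹ • p, ⟨fun i ↦ ?_, ?_⟩, hp.2, (smul_inv_smul₀ hs.ne' p).symm⟩
  · exact mul_nonneg (inv_nonneg.2 hs.le) (hp.1 i)
  · simp only [Pi.smul_apply, smul_eq_mul, ← Finset.mul_sum, inv_mul_cancel₀ hs.ne']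

/-- The estimator that applies `est` to a subsample of size `Poisson(t)` of the observed counts,
averaged over the subsampling, with default value `c` when there are too few observations. -/
noncomputable def subsampleEstimator (t : ℝ) (est : (Fin S → ℕ) → ℝ) (c : ℝ) :
    (Fin S → ℕ) → ℝ :=
  kernelAverage Finset.Iic (subsampleKernel t) est c

lemma sqRisk_subsampleEstimator_le {lam c θ : ℝ} (hlam : 0 ≤ lam) (ht : 0 ≤ t) (hp : IsDist p)
    (est : (Fin S → ℕ) → ℝ) (hc : |c - θ| ≤ 1) :
    sqRisk (prodPMFR lam p) (subsampleEstimator t est c) θ ≤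
      sqRisk (prodPMFR t p) est θ + ENNReal.ofReal (Real.exp (t - lam / 2)) := by
  have hdefault : ENNReal.ofReal ((c - θ) ^ 2) ≤ 1 :=
    ENNReal.ofReal_le_one.2 ((sq_le_one_iff_abs_le_one _).2 hc)
  -- `t * (r - 1) + lam * (r⁻¹ - 1)` is smallest at `r = √(lam / t)`, which is `2` if `lam = 4 * t`.
  have hmissing := tsum_prodPMFR_mul_one_sub_sum_subsampleKernel_le hlam ht one_le_two hp
  rw [show t * (2 - 1) + lam * (2⁻¹ - 1) = t - lam / 2 by ring] at hmissing
  refine (sqRisk_kernelAverage_le (prodPMFR_nonneg hlam hp.1) (subsampleKernel_nonneg ht)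
    (sum_subsampleKernel_le_one ht) (tsum_prodPMFR_mul_subsampleKernel_le hlam ht hp)
    est c θ).trans ?_
  gcongr
  exact (mul_le_of_le_one_right' hdefault).trans hmissing

lemma sqRisk_smul_subsampleEstimator_le {s c : ℝ} {q : Fin S → ℝ} (hn : 0 ≤ n) (ht : 0 ≤ t)
    (hε : ε < 1) (hp : IsDist p) (hs : |s - 1| ≤ ε) (est : (Fin S → ℕ) → ℝ)
    (hc : |c - L1dist p q| ≤ 1) :
    sqRisk (prodPMFR n (s • p)) (subsampleEstimator t est c) (L1dist (s • p) q) ≤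
      2 * (sqRisk (prodPMFR t p) est (L1dist p q) +
        ENNReal.ofReal (Real.exp (t - n * (1 - ε) / 2)) + ENNReal.ofReal (ε ^ 2)) := by
  have hs_ge : 1 - ε ≤ s := by linarith [(abs_le.1 hs).1]
  have hrate : 0 ≤ n * s := mul_nonneg hn (by linarith)
  have hbias : (L1dist p q - L1dist (s • p) q) ^ 2 ≤ ε ^ 2 := by
    rw [← sq_abs, abs_sub_comm]
    exact pow_le_pow_left₀ (abs_nonneg _)
      ((abs_L1dist_sub_L1dist_le _ _ q).trans ((L1dist_smul_self hp s).trans_le hs)) 2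
  rw [prodPMFR_smul]
  refine (sqRisk_le_two_mul_sqRisk_add (prodPMFR_nonneg hrate hp.1) _ (L1dist p q) _).trans ?_
  rw [tsum_prodPMFR_eq_one hrate hp, one_mul, ← mul_add]
  gcongr
  refine (sqRisk_subsampleEstimator_le hrate ht hp est hc).trans ?_
  gcongr

theorem RP_le_two_mul_RP_zero (hn : 0 ≤ n) (ht : 0 ≤ t) (hε : ε < 1) (q : Fin S → ℝ) :
    RP S n q ε ≤ 2 * (RP S t q 0 + ENNReal.ofReal (Real.exp (t - n * (1 - ε) / 2)) +
      ENNReal.ofReal (ε ^ 2)) := by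
  obtain ⟨c, hc⟩ := exists_forall_abs_sub_L1dist_le_one q
  rw [RP, RP, ENNReal.iInf_add, ENNReal.iInf_add,
    ENNReal.mul_iInf_of_ne two_ne_zero ENNReal.ofNat_ne_top]
  refine le_iInf fun est ↦ (iInf_le _ (subsampleEstimator t est c)).trans (iSup_le ?_)
  rintro ⟨p, hp⟩
  obtain ⟨s, p₀, hp₀, hs, rfl⟩ := hp.exists_eq_smul hε
  refine (sqRisk_smul_subsampleEstimator_le hn ht hε hp₀ hs est (hc p₀ hp₀)).trans ?_
  gcongr
  exact le_iSup (fun p : {p // ApproxDist 0 p} ↦ sqRisk (prodPMFR t p.1) est (L1dist p.1 q))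
    ⟨p₀, hp₀.approxDist_zero⟩

end MinimaxRisk

theorem RP_approx_to_exact_general (S : ℕ) {n ε : ℝ} (hn : 0 ≤ n) (hε : ε < 1) (q : Fin S → ℝ) :
    ENNReal.ofReal (1 / 4) * RP S n q ε - ENNReal.ofReal ((1 / 2) * Real.exp (-(n * (1 - ε) / 8))) -
        ENNReal.ofReal ((1 / 2) * ε ^ 2) ≤
      RP S (n * (1 - ε) / 4) q 0 := by
  have hrate : 0 ≤ n * (1 - ε) := mul_nonneg hn (sub_nonneg.2 hε.le)
  have hexp : Real.exp (n * (1 - ε) / 4 - n * (1 - ε) / 2) ≤ Real.exp (-(n * (1 - ε) / 8)) :=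
    Real.exp_le_exp.2 (by linarith)
  have hquarter : ENNReal.ofReal (1 / 4) * 2 = ENNReal.ofReal (1 / 2) := by
    rw [← ENNReal.ofReal_ofNat 2, ← ENNReal.ofReal_mul (by norm_num)]
    norm_num
  rw [tsub_le_iff_right, tsub_le_iff_right, ENNReal.ofReal_mul one_half_pos.le,
    ENNReal.ofReal_mul one_half_pos.le, add_right_comm]
  calc ENNReal.ofReal (1 / 4) * RP S n q ε
      ≤ ENNReal.ofReal (1 / 2) * (RP S (n * (1 - ε) / 4) q 0 +
          ENNReal.ofReal (Real.exp (n * (1 - ε) / 4 - n * (1 - ε) / 2)) +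
          ENNReal.ofReal (ε ^ 2)) := by
        rw [← hquarter, mul_assoc]
        gcongr
        exact RP_le_two_mul_RP_zero hn (by positivity) hε q
    _ ≤ RP S (n * (1 - ε) / 4) q 0 +
          ENNReal.ofReal (1 / 2) * ENNReal.ofReal (Real.exp (-(n * (1 - ε) / 8))) +
          ENNReal.ofReal (1 / 2) * ENNReal.ofReal (ε ^ 2) := by
        rw [mul_add, mul_add]
        gcongr
        exact mul_le_of_le_one_left' (ENNReal.ofReal_le_one.2 one_half_lt_one.le)

/-- relating the minimax risk over approximate probability vectors to the
one over exact probability vectors. -/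
theorem RP_approx_to_exact (S n : ℕ) (hS : 0 < S) (hn : 0 < n)
    (ε : ℝ) (hε0 : 0 < ε) (hε1 : ε < 1) (q : Fin S → ℝ) (hq : IsDist q) :
    ENNReal.ofReal (1 / 4) * RP S (n : ℝ) q ε -
        ENNReal.ofReal ((1 / 2) * Real.exp (-((n : ℝ) * (1 - ε) / 8))) -
        ENNReal.ofReal ((1 / 2) * ε ^ 2) ≤
      RP S ((n : ℝ) * (1 - ε) / 4) q 0 :=
  RP_approx_to_exact_general S n.cast_nonneg hε1 q
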